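/- Let G = ℤ/2ℤ act on the abelian group A = ℤ/3ℤ × ℤ/3ℤ so that the nontrivial element of G acts by inversion (negation), and let D be the subgroup of Z¹(G, A) consisting of those 1-cocycles whose value at the nontrivial element of G lies in the antidiagonal subgroup {(g, h) ∈ ℤ/3ℤ × ℤ/3ℤ : g + h = 0}. Then the quotient group Z¹(G, A)/D has exactly 3 elements; in particular, since H¹(G, A) is trivial, the quotient Z¹(G, A)/D is not isomorphic to H¹(G, A). -/

import Mathlib

/-- The coefficient group `A = ℤ/3ℤ × ℤ/3ℤ`. -/
abbrev A : Type := ZMod 3 × ZMod 3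

/-- The action of `G = ℤ/2ℤ` on `A` in which the nontrivial element acts by
negation (inversion). -/
def act (g : ZMod 2) (a : A) : A := if g = 0 then a else -a

lemma act_zero (g : ZMod 2) : act g (0 : A) = 0 := by
  unfold act; split_ifs <;> simp

lemma act_add (g : ZMod 2) (a b : A) : act g (a + b) = act g a + act g b := by
  unfold act; split_ifs <;> [rfl; exact neg_add a b]

lemma act_neg (g : ZMod 2) (a : A) : act g (-a) = -act g a := by
  unfold act; split_ifs <;> simp

/-- The group `Z¹(G, A)` of 1-cocycles: functions `ρ : G → A` with
`ρ(g + h) = ρ(g) + g · ρ(h)`. -/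
def Z1 : AddSubgroup (ZMod 2 → A) where
  carrier := {ρ | ∀ g h : ZMod 2, ρ (g + h) = ρ g + act g (ρ h)}
  zero_mem' := by
    intro g h
    simp [act_zero]
  add_mem' := by
    intro ρ σ hρ hσ g h
    simp only [Pi.add_apply, hρ g h, hσ g h, act_add]
    abel
  neg_mem' := by
    intro ρ hρ g h
    simp only [Pi.neg_apply, hρ g h, act_neg]
    abel


/-- The subgroup `B¹(G, A) ≤ Z¹(G, A)` of 1-coboundaries, i.e. cocycles of the
form `g ↦ g · a − a` for some `a ∈ A`. -/
def B1 : AddSubgroup Z1 where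
  carrier := {ρ | ∃ a : A, ∀ g : ZMod 2, (ρ : ZMod 2 → A) g = act g a - a}
  zero_mem' := ⟨0, by intro g; simp [act_zero]⟩
  add_mem' := by
    rintro ρ σ ⟨a, ha⟩ ⟨b, hb⟩
    refine ⟨a + b, fun g => ?_⟩
    have h : ((ρ + σ : Z1) : ZMod 2 → A) g
        = (ρ : ZMod 2 → A) g + (σ : ZMod 2 → A) g := rfl
    rw [h, ha g, hb g, act_add]
    abel
  neg_mem' := by
    rintro ρ ⟨a, ha⟩
    refine ⟨-a, fun g => ?_⟩
    have h : ((-ρ : Z1) : ZMod 2 → A) g = -((ρ : ZMod 2 → A) g) := rfl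
    rw [h, ha g, act_neg]
    abel

/-- The subgroup `D ≤ Z¹(G, A)` of 1-cocycles whose value at the nontrivial
element of `G` lies in the antidiagonal `{(g, h) : g + h = 0}` of `A`. -/
def D : AddSubgroup Z1 where
  carrier := {ρ | ((ρ : ZMod 2 → A) 1).1 + ((ρ : ZMod 2 → A) 1).2 = 0}
  zero_mem' := by
    show ((0 : ZMod 2 → A) 1).1 + ((0 : ZMod 2 → A) 1).2 = 0
    simp
  add_mem' := by
    intro ρ σ hρ hσ
    have h : ((ρ + σ : Z1) : ZMod 2 → A) 1
        = (ρ : ZMod 2 → A) 1 + (σ : ZMod 2 → A) 1 := rfl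
    show (((ρ + σ : Z1) : ZMod 2 → A) 1).1 + (((ρ + σ : Z1) : ZMod 2 → A) 1).2 = 0
    rw [h, Prod.fst_add, Prod.snd_add]
    have hρ' : ((ρ : ZMod 2 → A) 1).1 + ((ρ : ZMod 2 → A) 1).2 = 0 := hρ
    have hσ' : ((σ : ZMod 2 → A) 1).1 + ((σ : ZMod 2 → A) 1).2 = 0 := hσ
    linear_combination hρ' + hσ'
  neg_mem' := by
    intro ρ hρ
    have h : ((-ρ : Z1) : ZMod 2 → A) 1 = -((ρ : ZMod 2 → A) 1) := rfl
    show (((-ρ : Z1) : ZMod 2 → A) 1).1 + (((-ρ : Z1) : ZMod 2 → A) 1).2 = 0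
    rw [h, Prod.fst_neg, Prod.snd_neg]
    have hρ' : ((ρ : ZMod 2 → A) 1).1 + ((ρ : ZMod 2 → A) 1).2 = 0 := hρ
    linear_combination -hρ'

/-!
Since the nontrivial element of `G` acts by negation, the cocycle condition on `ρ` reduces to
`ρ 0 = 0`: the relation at `1 + 1 = 0` only says `ρ 0 = ρ 1 - ρ 1`. So evaluation at `1` identifies
`Z¹` with `A`. Under this identification the coboundaries are the elements `-2a`, which are all of
`A` because `3A = 0`, while `D` becomes the kernel of the surjective addition map `A → ℤ/3ℤ`.
-/

section Antidiagonal

variable (M : Type*) [AddCommGroup M]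

/-- The antidiagonal subgroup `{(x, y) | x + y = 0}` of `M × M`, encoded as the kernel of addition;
for `M = ℤ/3ℤ` it is the subgroup of `A` that cuts out `D`. -/
def antidiagonal : AddSubgroup (M × M) := (addAddMonoidHom : M × M →+ M).ker

/-- The isomorphism `(M × M) / antidiagonal ≃ M` induced by addition. -/
noncomputable def quotientAntidiagonalEquiv : (M × M) ⧸ antidiagonal M ≃+ M :=
  QuotientAddGroup.quotientKerEquivOfSurjective (addAddMonoidHom : M × M →+ M)
    fun x => ⟨(x, 0), add_zero x⟩

end Antidiagonal

lemma act_zero_left (a : A) : act 0 a = a := if_pos rfl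

lemma act_one_left (a : A) : act 1 a = -a := if_neg one_ne_zero

lemma forall_zmod_two {p : ZMod 2 → Prop} : (∀ g, p g) ↔ p 0 ∧ p 1 := Fin.forall_fin_two

lemma mem_Z1_iff {ρ : ZMod 2 → A} : ρ ∈ Z1 ↔ ρ 0 = 0 := by
  change (∀ g h, ρ (g + h) = ρ g + act g (ρ h)) ↔ ρ 0 = 0
  have one_add_one : (1 + 1 : ZMod 2) = 0 := rfl
  simp +contextual [forall_zmod_two, act_zero_left, act_one_left, one_add_one]

/-- The identification of a cocycle with its value at the nontrivial element of `G`. -/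
def evalOneEquiv : Z1 ≃+ A where
  toFun ρ := ρ.1 1
  invFun a := ⟨Pi.single 1 a, mem_Z1_iff.mpr rfl⟩
  left_inv ρ := Subtype.ext <| funext <| forall_zmod_two.mpr ⟨(mem_Z1_iff.mp ρ.2).symm, rfl⟩
  right_inv _ := rfl
  map_add' _ _ := rfl

lemma act_one_sub_self (a : A) : act 1 a - a = a := by
  have three_eq_zero : (3 : A) = 0 := rfl
  rw [act_one_left]
  linear_combination -a * three_eq_zero

lemma B1_eq_top : B1 = ⊤ := by
  refine eq_top_iff.mpr fun ρ _ => ⟨ρ.1 1, forall_zmod_two.mpr ⟨?_, ?_⟩⟩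
  · rw [mem_Z1_iff.mp ρ.2, act_zero_left, sub_self]
  · exact (act_one_sub_self _).symm

lemma subsingleton_quotient_B1 : Subsingleton (Z1 ⧸ B1) :=
  B1_eq_top ▸ QuotientAddGroup.subsingleton_quotient_top

lemma comap_evalOneEquiv_antidiagonal :
    (antidiagonal (ZMod 3)).comap (evalOneEquiv : Z1 →+ A) = D :=
  rfl

lemma map_evalOneEquiv_D : D.map (evalOneEquiv : Z1 →+ A) = antidiagonal (ZMod 3) := by
  rw [← comap_evalOneEquiv_antidiagonal]
  exact AddSubgroup.map_comap_eq_self_of_surjective evalOneEquiv.surjective _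

/-- The isomorphism `Z¹ / D ≃ ℤ/3ℤ` sending the class of `ρ` to the sum of the two coordinates of
its value at the nontrivial element of `G`. -/
noncomputable def quotientDEquiv : Z1 ⧸ D ≃+ ZMod 3 :=
  (QuotientAddGroup.congr D (antidiagonal (ZMod 3)) evalOneEquiv map_evalOneEquiv_D).trans
    (quotientAntidiagonalEquiv (ZMod 3))

/-- The quotient `Z¹(G, A) / D` has exactly 3 elements; in particular, since
`H¹(G, A) = Z¹(G, A) / B¹(G, A)` is trivial, `Z¹(G, A) / D` is not isomorphic
to `H¹(G, A)`. -/
theorem stmt3 :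
    Nat.card (Z1 ⧸ D) = 3 ∧ IsEmpty ((Z1 ⧸ D) ≃+ (Z1 ⧸ B1)) := by
  refine ⟨(Nat.card_congr quotientDEquiv.toEquiv).trans (Nat.card_zmod 3), ⟨fun e => ?_⟩⟩
  have : Subsingleton (Z1 ⧸ B1) := subsingleton_quotient_B1
  have : Subsingleton (ZMod 3) := (quotientDEquiv.symm.trans e).injective.subsingleton
  exact not_subsingleton (ZMod 3) this
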